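/- arXiv:1307.2767 — 3 statements merged into one kernel-verified Lean document; each statement's English description precedes it below -/
import Mathlib

section
/- Let k ≥ 2, n ≥ 3, and m ≥ 1 be integers with k odd, 3 ∤ n, and 4 ∤ n. Then G(k,n,m)/F_n^{k+m-1} ≡ 1 (mod F_n). -/
/-- `G n m k` is the sequence from the paper: `G(1,n,m) = F_n^m`,
`G(k+1,n,m) = F_{n·G(k,n,m)}`. The value at `k = 0` is junk. -/
def G (n m : ℕ) : ℕ → ℕ
  | 0 => 1
  | 1 => Nat.fib n ^ m
  | (k+2) => Nat.fib (n * G n m (k+1))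

/-!
Write `F = F_n` and `u = F_{n+1}`, so that `φ ^ n = u + F (φ - 1)` in `ℤ[φ]`. When `F` is odd and
`F ^ a ∣ N`, expanding `φ ^ (n N) = (u + F (φ - 1)) ^ N` and comparing coefficients of `φ` gives
`F_{n N} ≡ N F u ^ (N - 1) [MOD F ^ (a + 2)]`. By Cassini's identity `u ^ 2 ≡ (-1) ^ n [MOD F]`,
so `u ^ (N - 1) ≡ 1 [MOD F]` as soon as `N` is odd and, for odd `n`, `N ≡ 1 [MOD 4]`.

As `2 = F_3` and `3 = F_4`, the conditions `3 ∤ n` and `4 ∤ n` say that `F_n` is prime to `6`. This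
passes to every `N = G(k,n,m)`, and for odd `n` the period `6` of the Fibonacci numbers modulo `4`
gives `N ≡ 1 [MOD 4]`. Hence `G(k,n,m) ≡ F ^ (k + m - 1) [MOD F ^ (k + m)]` by induction on `k`.
-/

open Nat (fib)

section OddPower

variable {R : Type*} [CommRing R] {p : ℕ}

theorem pow_add_three_dvd_add_pow_mul_pow_sub (hp : Odd p) (x y : R) (a : ℕ) :
    (p : R) ^ (a + 3) ∣ (x + p ^ (a + 1) * y) ^ p - (x ^ p + p ^ (a + 2) * x ^ (p - 1) * y) := by
  obtain ⟨s, hs⟩ := odd_sq_dvd_geom_sum₂_sub x (p ^ a * y) hp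
  have h_geom := (Commute.all (x + p * (p ^ a * y)) x).geom_sum₂_mul p
  rw [sub_eq_iff_eq_add.1 hs] at h_geom
  rw [pow_succ' (p : R) a, mul_assoc]
  exact ⟨s * y, by linear_combination -h_geom⟩

theorem pow_add_two_dvd_add_mul_pow_sub (hp : Odd p) (x y : R) {a N : ℕ} (hN : p ^ a ∣ N) :
    (p : R) ^ (a + 2) ∣ (x + p * y) ^ N - (x ^ N + N * p * x ^ (N - 1) * y) := by
  induction a generalizing N with
  | zero =>
    obtain ⟨t, ht⟩ := sq_dvd_add_pow_sub_sub (p * y) x N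
    exact ⟨y ^ 2 * t, by linear_combination ht⟩
  | succ a ih =>
    obtain ⟨c, rfl⟩ := hN
    obtain rfl | hc := eq_or_ne c 0
    · simp
    obtain ⟨M, hM⟩ : ∃ M, p ^ a * c = M + 1 :=
      Nat.exists_eq_add_one_of_ne_zero (mul_ne_zero (pow_pos hp.pos a).ne' hc)
    obtain ⟨t, ht⟩ := ih (dvd_mul_right (p ^ a) c)
    have hM_cast : (p : R) ^ a * c = M + 1 := mod_cast congrArg (Nat.cast (R := R)) hM
    have h_pow : (x + p * y) ^ (M + 1) =
        x ^ (M + 1) + p ^ (a + 1) * (c * x ^ M * y + p * t) := by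
      rw [hM, Nat.add_sub_cancel] at ht
      push_cast at ht
      linear_combination ht - p * x ^ M * y * hM_cast
    have h_exp : x ^ ((M + 1) * p - 1) = (x ^ (M + 1)) ^ (p - 1) * x ^ M := by
      obtain ⟨q, rfl⟩ := Nat.exists_eq_add_one_of_ne_zero hp.pos.ne'
      have h_sub : (M + 1) * (q + 1) - 1 = (M + 1) * q + M := by
        rw [mul_add_one]
        lia
      rw [h_sub, Nat.add_sub_cancel, pow_add, pow_mul]
    obtain ⟨s, hs⟩ := pow_add_three_dvd_add_pow_mul_pow_sub hp (x ^ (M + 1))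
      (c * x ^ M * y + p * t) a
    rw [show p ^ (a + 1) * c = (M + 1) * p by rw [← hM]; ring, h_exp, pow_mul, pow_mul, h_pow]
    refine ⟨s + (x ^ (M + 1)) ^ (p - 1) * t, ?_⟩
    push_cast
    linear_combination hs + p ^ 2 * (x ^ (M + 1)) ^ (p - 1) * x ^ M * y * hM_cast

end OddPower

/-- The ring `ℤ[φ]` of integers of `ℚ(√5)`, in which `omega` is the golden ratio `φ`. -/
abbrev GoldenInt := QuadraticAlgebra ℤ 1 1

namespace GoldenInt

open QuadraticAlgebra

theorem omega_pow_eq_fib (n : ℕ) :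
    (omega : GoldenInt) ^ n = (fib (n + 1) : GoldenInt) + (fib n : GoldenInt) * (omega - 1) := by
  induction n with
  | zero => simp
  | succ n ih =>
    rw [pow_succ, ih, Nat.fib_add_two]
    ext <;> simp

theorem im_natCast_add_natCast_mul_omega_sub_one (u v : ℕ) :
    ((u : GoldenInt) + (v : GoldenInt) * (omega - 1)).im = (v : ℤ) := by
  simp

theorem im_omega_pow (n : ℕ) : ((omega : GoldenInt) ^ n).im = fib n := by
  rw [omega_pow_eq_fib, im_natCast_add_natCast_mul_omega_sub_one]

end GoldenInt

open QuadraticAlgebra GoldenInt in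
theorem fib_mul_modEq {n N a : ℕ} (hF : Odd (fib n)) (hN : fib n ^ a ∣ N) :
    fib (n * N) ≡ N * fib n * fib (n + 1) ^ (N - 1) [MOD fib n ^ (a + 2)] := by
  have h_dvd := pow_add_two_dvd_add_mul_pow_sub hF (fib (n + 1) : GoldenInt) (omega - 1) hN
  rw [← omega_pow_eq_fib, ← pow_mul] at h_dvd
  simp only [← Nat.cast_pow, ← Nat.cast_mul] at h_dvd
  rw [← map_natCast (algebraMap ℤ GoldenInt), algebraMap_dvd_iff] at h_dvd
  obtain ⟨-, h_im⟩ := h_dvd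
  rw [im_sub, im_omega_pow, im_natCast_add_natCast_mul_omega_sub_one] at h_im
  exact (Nat.modEq_iff_dvd.2 h_im).symm

theorem fib_succ_sq_modEq (n : ℕ) : (fib (n + 1) : ℤ) ^ 2 ≡ (-1) ^ n [ZMOD fib n] := by
  have h_cassini := Int.fib_succ_mul_fib_pred_sub_fib_sq n
  have h_rec : Int.fib (n + 1) = Int.fib (n - 1) + Int.fib n := by grind [Int.fib_add_two (n - 1)]
  change Int.fib (n + 1) ^ 2 ≡ (-1) ^ (n : ℤ).natAbs [ZMOD Int.fib n]
  refine Int.modEq_iff_dvd.2 ⟨-(Int.fib (n + 1) + Int.fib n), ?_⟩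
  linear_combination -h_cassini - Int.fib (n + 1) * h_rec

theorem fib_succ_pow_pred_modEq_one {n N : ℕ} (hN : Odd N) (h_four : Odd n → N ≡ 1 [MOD 4]) :
    fib (n + 1) ^ (N - 1) ≡ 1 [MOD fib n] := by
  obtain ⟨t, rfl⟩ := hN
  have h_even : Even (n * t) := by
    rcases n.even_or_odd with hn | hn
    · exact hn.mul_right t
    · have ht : Even t := by grind [Nat.ModEq, h_four hn]
      exact ht.mul_left n
  rw [← Int.natCast_modEq_iff, Nat.add_sub_cancel, pow_mul]
  simpa [← pow_mul, h_even.neg_one_pow] using (fib_succ_sq_modEq n).pow t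

theorem fib_dvd_fib_iff {m n : ℕ} (hm : m ≠ 2) : fib m ∣ fib n ↔ m ∣ n := by
  refine ⟨fun h => ?_, Nat.fib_dvd m n⟩
  obtain rfl | rfl | hm3 : m = 0 ∨ m = 1 ∨ 3 ≤ m := by lia
  · simpa using h
  · exact one_dvd n
  rw [← Nat.gcd_eq_left_iff_dvd, ← Nat.fib_gcd] at h
  rw [← Nat.gcd_eq_left_iff_dvd]
  have h_gcd : 2 ≤ m.gcd n := by
    by_contra! h_lt
    have h_fib_lt := (Nat.fib_lt_fib le_rfl).2 hm3
    have h_fib_le := Nat.fib_mono h_lt.le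
    lia
  exact Nat.fib_strictMonoOn.injOn h_gcd (show 2 ≤ m by lia) h

theorem coprime_fib_six_iff {n : ℕ} : (fib n).Coprime 6 ↔ ¬ 3 ∣ n ∧ ¬ 4 ∣ n := by
  have h_two : Nat.Coprime 2 (fib n) ↔ ¬ 3 ∣ n := by
    rw [← fib_dvd_fib_iff (by simp)]
    exact Nat.prime_two.coprime_iff_not_dvd
  have h_three : Nat.Coprime 3 (fib n) ↔ ¬ 4 ∣ n := by
    rw [← fib_dvd_fib_iff (by simp)]
    exact Nat.prime_three.coprime_iff_not_dvd
  rw [Nat.coprime_comm, ← h_two, ← h_three]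
  exact Nat.coprime_mul_iff_left (m := 2) (n := 3)

theorem fib_modEq_one_four {n : ℕ} (hn : n.Coprime 6) : fib n ≡ 1 [MOD 4] := by
  have h_periodic : Function.Periodic (fun t => fib t % 4) 6 := fun t => by
    simp only [Nat.fib_add_two]
    lia
  have h_residue : ∀ r < 6, r.Coprime 6 → fib r % 4 = 1 := by decide
  exact (h_periodic.map_mod_nat n).symm.trans
    (h_residue (n % 6) (Nat.mod_lt n (by simp)) (by simpa [Nat.Coprime] using hn))

section G

variable {n m : ℕ}

theorem G_add_one {k : ℕ} (hk : k ≠ 0) : G n m (k + 1) = fib (n * G n m k) := by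
  obtain ⟨k, rfl⟩ := Nat.exists_eq_add_one_of_ne_zero hk
  rfl

theorem coprime_G_six (h : (fib n).Coprime 6) (k : ℕ) : (G n m k).Coprime 6 := by
  induction k with
  | zero => exact Nat.coprime_one_left 6
  | succ k ih =>
    obtain rfl | hk := eq_or_ne k 0
    · exact h.pow_left m
    · have h_three : Nat.Coprime 3 (G n m k) := (ih.coprime_dvd_right ⟨2, rfl⟩).symm
      have h_four : Nat.Coprime 4 (G n m k) :=
        Nat.Coprime.pow_left 2 (ih.coprime_dvd_right (⟨3, rfl⟩ : 2 ∣ 6)).symm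
      obtain ⟨h3, h4⟩ := coprime_fib_six_iff.1 h
      rw [G_add_one hk, coprime_fib_six_iff]
      exact ⟨mt h_three.dvd_of_dvd_mul_right h3, mt h_four.dvd_of_dvd_mul_right h4⟩

theorem G_modEq_one_four (h : (fib n).Coprime 6) (hn : Odd n) (k : ℕ) : G n m k ≡ 1 [MOD 4] := by
  have h_three : n.Coprime 3 :=
    (Nat.prime_three.coprime_iff_not_dvd.2 (coprime_fib_six_iff.1 h).1).symm
  have h_six : n.Coprime 6 := hn.coprime_two_right.mul_right h_three
  match k with
  | 0 => rfl
  | 1 => simpa [G] using (fib_modEq_one_four h_six).pow m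
  | k + 2 => exact fib_modEq_one_four (h_six.mul_left (coprime_G_six h (k + 1)))

theorem G_add_one_modEq (h : (fib n).Coprime 6) (k : ℕ) :
    G n m (k + 1) ≡ fib n ^ (k + m) [MOD fib n ^ (k + m + 1)] := by
  induction k with
  | zero => simp [G, Nat.ModEq.refl]
  | succ k ih =>
    set N := G n m (k + 1)
    have h_odd_fib : Odd (fib n) := Nat.coprime_two_right.1 (h.coprime_dvd_right ⟨3, rfl⟩)
    have h_odd : Odd N :=
      Nat.coprime_two_right.1 ((coprime_G_six h (k + 1)).coprime_dvd_right ⟨3, rfl⟩)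
    have h_dvd : fib n ^ (k + m) ∣ N := (ih.dvd_iff (pow_dvd_pow _ (Nat.le_succ _))).2 dvd_rfl
    have h_unit : fib (n + 1) ^ (N - 1) ≡ 1 [MOD fib n] :=
      fib_succ_pow_pred_modEq_one h_odd fun hn => G_modEq_one_four h hn (k + 1)
    rw [add_right_comm k 1 m]
    calc
      G n m (k + 1 + 1) = fib (n * N) := rfl
      _ ≡ N * fib n * fib (n + 1) ^ (N - 1) [MOD fib n ^ (k + m + 2)] :=
        fib_mul_modEq h_odd_fib h_dvd
      _ ≡ N * fib n * 1 [MOD fib n ^ (k + m + 2)] :=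
        (h_unit.mul_left' (N * fib n)).of_dvd
          (mul_dvd_mul_right (mul_dvd_mul_right h_dvd (fib n)) (fib n))
      _ = N * fib n := mul_one _
      _ ≡ fib n ^ (k + m) * fib n [MOD fib n ^ (k + m + 2)] := ih.mul_right' (fib n)
      _ = fib n ^ (k + m + 1) := (pow_succ _ _).symm

end G

theorem stmt_2_general {k n m : ℕ} (hk : k ≠ 0) (h3 : ¬ 3 ∣ n) (h4 : ¬ 4 ∣ n) :
    G n m k / fib n ^ (k + m - 1) ≡ 1 [MOD fib n] := by
  obtain ⟨k, rfl⟩ := Nat.exists_eq_add_one_of_ne_zero hk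
  have hF : 0 < fib n ^ (k + m) :=
    pow_pos (Nat.fib_pos.2 (Nat.pos_of_ne_zero (by rintro rfl; simp at h3))) _
  have h_modEq := G_add_one_modEq (m := m) (coprime_fib_six_iff.2 ⟨h3, h4⟩) k
  obtain ⟨q, hq⟩ : fib n ^ (k + m) ∣ G n m (k + 1) :=
    (h_modEq.dvd_iff (pow_dvd_pow _ (Nat.le_succ _))).2 dvd_rfl
  rw [add_right_comm, Nat.add_sub_cancel, hq, Nat.mul_div_cancel_left q hF]
  rw [hq, pow_succ] at h_modEq
  exact Nat.ModEq.mul_left_cancel' hF.ne' (by rwa [mul_one])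

theorem stmt_2 (k n m : ℕ) (hk : 2 ≤ k) (hn : 3 ≤ n) (hm : 1 ≤ m)
    (hko : Odd k) (h3 : ¬ (3 ∣ n)) (h4 : ¬ (4 ∣ n)) :
    G n m k / Nat.fib n ^ (k + m - 1) ≡ 1 [MOD Nat.fib n] :=
  stmt_2_general (by lia) h3 h4
end

section
/- For all integers k ≥ 2, n ≥ 4, and m ≥ 1, the power F_n^{k+m-1} exactly divides G(k,n,m); that is, F_n^{k+m-1} ∣ G(k,n,m) but F_n^{k+m} ∤ G(k,n,m). -/
/-! Write `φ` for the golden ratio. Expanding `φ^(nm) = (F_n φ + F_{n-1})^m` and its conjugate by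
the binomial theorem, Binet's formula gives
`F_{nm} = ∑ i, C(m,i) F_n^i F_{n-1}^(m-i) F_i = F_n (m F_{n-1}^(m-1) + ∑_{i ≥ 2} ⋯)`.

If `d ∣ F_n`, then taking `m = d` makes the bracket divisible by `d`. Hence `F_n^(j+1)` divides
`F_{n F_n^j}`, and induction on `k` yields `F_n^(k+m-1) ∣ G(k,n,m)`.

If a prime power `p^e > 2` divides `F_n`, then in the bracket the terms with `i ≥ 2` are divisible
by a higher power of `p` than `m`, so `v_p(F_{nm}) = v_p(F_n) + v_p(m)`. Hence
`v_p(G(k,n,m)) = (k+m-1) v_p(F_n)`, which excludes `F_n^(k+m) ∣ G(k,n,m)`. Such a prime power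
exists because `F_n ≥ 3`. -/

section Expansion

open Real goldenRatio

theorem fib_succ_mul_eq_sum_choose (n m : ℕ) :
    Nat.fib ((n + 1) * m) = ∑ i ∈ Finset.range (m + 1),
      m.choose i * Nat.fib (n + 1) ^ i * Nat.fib n ^ (m - i) * Nat.fib i := by
  have binomial (x : ℝ) : (x * Nat.fib (n + 1) + Nat.fib n) ^ m = ∑ i ∈ Finset.range (m + 1),
      m.choose i * Nat.fib (n + 1) ^ i * Nat.fib n ^ (m - i) * x ^ i := by
    rw [add_pow]
    exact Finset.sum_congr rfl fun i _ ↦ by ring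
  have binet : (Nat.fib ((n + 1) * m) : ℝ) = ∑ i ∈ Finset.range (m + 1),
      m.choose i * Nat.fib (n + 1) ^ i * Nat.fib n ^ (m - i) * (Nat.fib i : ℝ) := by
    rw [coe_fib_eq, pow_mul, pow_mul, ← goldenRatio_mul_fib_succ_add_fib,
      ← goldenConj_mul_fib_succ_add_fib, binomial, binomial, ← Finset.sum_sub_distrib,
      Finset.sum_div]
    exact Finset.sum_congr rfl fun i _ ↦ by rw [coe_fib_eq i, ← mul_sub, mul_div_assoc]
  exact_mod_cast binet

end Expansion

theorem fib_succ_mul_succ_eq_fib_mul (n m : ℕ) :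
    Nat.fib ((n + 1) * (m + 1)) = Nat.fib (n + 1) * ((m + 1) * Nat.fib n ^ m +
      ∑ i ∈ Finset.range m, (m + 1).choose (i + 2) * Nat.fib (n + 1) ^ (i + 1) *
        (Nat.fib n ^ (m - (i + 1)) * Nat.fib (i + 2))) := by
  rw [fib_succ_mul_eq_sum_choose, Finset.sum_range_succ', Finset.sum_range_succ', mul_add,
    Finset.mul_sum, add_comm (Nat.fib (n + 1) * _)]
  have higher_terms : ∀ i ∈ Finset.range m,
      (m + 1).choose (i + 1 + 1) * Nat.fib (n + 1) ^ (i + 1 + 1) * Nat.fib n ^ (m + 1 - (i + 1 + 1))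
        * Nat.fib (i + 1 + 1) =
      Nat.fib (n + 1) * ((m + 1).choose (i + 2) * Nat.fib (n + 1) ^ (i + 1) *
        (Nat.fib n ^ (m - (i + 1)) * Nat.fib (i + 2))) := fun i _ ↦ by
    rw [Nat.add_sub_add_right]
    ring
  rw [Finset.sum_congr rfl higher_terms]
  simp only [zero_add, Nat.choose_one_right, pow_one, Nat.add_sub_cancel, Nat.fib_one,
    Nat.fib_zero, mul_one, mul_zero, add_zero]
  ring

theorem fib_mul_dvd_fib_mul_of_dvd_fib {n d : ℕ} (h : d ∣ Nat.fib n) :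
    Nat.fib n * d ∣ Nat.fib (n * d) := by
  obtain _ | n := n
  · simp
  obtain _ | d := d
  · simp
  rw [fib_succ_mul_succ_eq_fib_mul]
  refine mul_dvd_mul_left _ (dvd_add (dvd_mul_right _ _) (Finset.dvd_sum fun i _ ↦ ?_))
  exact ((h.trans (dvd_pow_self _ i.succ_ne_zero)).mul_left _).mul_right _

theorem fib_pow_succ_dvd_fib_mul_fib_pow (n j : ℕ) :
    Nat.fib n ^ (j + 1) ∣ Nat.fib (n * Nat.fib n ^ j) := by
  induction j with
  | zero => simp
  | succ j ih =>
    have fib_dvd : Nat.fib n ∣ Nat.fib (n * Nat.fib n ^ j) := Nat.fib_dvd _ _ (dvd_mul_right _ _)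
    rw [pow_succ, pow_succ _ j, ← mul_assoc]
    exact (mul_dvd_mul_right ih _).trans (fib_mul_dvd_fib_mul_of_dvd_fib fib_dvd)

section LiftingTheExponent

variable {p e : ℕ}

/-- Put `j = i + 2`. Since `j * C(m+1, j) = (m+1) * C(m, j-1)`, the binomial coefficient loses at
most `v_p(j)` factors of `p` from `m + 1`, while `p ^ v_p(j) ≤ j < 3 ^ (j-1) ≤ p ^ (e * (j-1))`. -/
theorem pow_succ_dvd_choose_mul_pow (hp : p.Prime) (he : 2 < p ^ e) {b m x : ℕ}
    (hm : p ^ b ∣ m + 1) (hx : p ^ e ∣ x) (i : ℕ) :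
    p ^ (b + 1) ∣ (m + 1).choose (i + 2) * x ^ (i + 1) := by
  obtain ⟨s, t, hpt, hst⟩ := Nat.exists_eq_pow_mul_and_not_dvd (i + 1).succ_ne_zero p hp.ne_one
  have dvd_pow_mul_choose : p ^ b ∣ p ^ s * (m + 1).choose (i + 2) := by
    have : p ^ b ∣ t * (p ^ s * (m + 1).choose (i + 2)) := by
      rw [← mul_assoc, mul_comm t, ← hst, mul_comm, ← Nat.add_one_mul_choose_eq]
      exact hm.mul_right _
    exact (((hp.coprime_iff_not_dvd).2 hpt).pow_left b).dvd_of_dvd_mul_left this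
  have pow_lt : p ^ s < p ^ (e * (i + 1)) :=
    calc p ^ s ≤ i + 2 := Nat.le_of_dvd (by omega) ⟨t, hst⟩
      _ ≤ 2 ^ (i + 1) := Nat.lt_two_pow_self
      _ < 3 ^ (i + 1) := Nat.pow_lt_pow_left (by norm_num) i.succ_ne_zero
      _ ≤ (p ^ e) ^ (i + 1) := Nat.pow_le_pow_left he _
      _ = p ^ (e * (i + 1)) := (pow_mul ..).symm
  have pow_succ_dvd : p ^ (s + 1) ∣ x ^ (i + 1) :=
    calc p ^ (s + 1) ∣ p ^ (e * (i + 1)) :=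
          pow_dvd_pow p ((Nat.pow_lt_pow_iff_right hp.one_lt).1 pow_lt)
      _ = (p ^ e) ^ (i + 1) := pow_mul ..
      _ ∣ x ^ (i + 1) := pow_dvd_pow_of_dvd hx _
  calc p ^ (b + 1) = p ^ b * p := pow_succ ..
    _ ∣ p ^ s * (m + 1).choose (i + 2) * p := mul_dvd_mul_right dvd_pow_mul_choose p
    _ = (m + 1).choose (i + 2) * p ^ (s + 1) := by ring
    _ ∣ (m + 1).choose (i + 2) * x ^ (i + 1) := mul_dvd_mul_left _ pow_succ_dvd

/-- The pair `2 < p ^ e`, `p ^ e ∣ F_n` encodes `p ∣ F_n` for odd `p` and `4 ∣ F_n` for `p = 2`;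
compare `F_3 = 2` and `F_6 = 8`. -/
theorem emultiplicity_fib_mul (hp : p.Prime) (he : 2 < p ^ e) {n : ℕ}
    (hn : p ^ e ∣ Nat.fib n) (m : ℕ) :
    emultiplicity p (Nat.fib (n * m)) = emultiplicity p (Nat.fib n) + emultiplicity p m := by
  obtain _ | n := n
  · simp
  obtain _ | m := m
  · simp
  obtain ⟨b, u, hpu, hm⟩ : ∃ b u, ¬ p ∣ u ∧ m + 1 = p ^ b * u :=
    Nat.exists_eq_pow_mul_and_not_dvd m.succ_ne_zero p hp.ne_one
  obtain ⟨t, ht⟩ : p ^ (b + 1) ∣ ∑ i ∈ Finset.range m, (m + 1).choose (i + 2) *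
      Nat.fib (n + 1) ^ (i + 1) * (Nat.fib n ^ (m - (i + 1)) * Nat.fib (i + 2)) :=
    Finset.dvd_sum fun i _ ↦ (pow_succ_dvd_choose_mul_pow hp he ⟨u, hm⟩ hn i).mul_right _
  have fib_eq : Nat.fib ((n + 1) * (m + 1)) =
      Nat.fib (n + 1) * (p ^ b * (u * Nat.fib n ^ m + p * t)) := by
    rw [fib_succ_mul_succ_eq_fib_mul, ht, hm]
    ring
  have not_dvd_fib : ¬ p ∣ Nat.fib n := fun h ↦
    have dvd_fib_succ : p ∣ Nat.fib (n + 1) :=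
      (dvd_pow_self p (by rintro rfl; simp at he)).trans hn
    hp.one_lt.ne' (Nat.eq_one_of_dvd_coprimes (Nat.fib_coprime_fib_succ n) h dvd_fib_succ)
  have not_dvd_cofactor : ¬ p ∣ u * Nat.fib n ^ m + p * t := by
    rw [Nat.dvd_add_left (dvd_mul_right p t), hp.dvd_mul]
    exact not_or_intro hpu fun h ↦ not_dvd_fib (hp.dvd_of_dvd_pow h)
  rw [fib_eq, hm, emultiplicity_mul hp.prime, emultiplicity_mul hp.prime,
    emultiplicity_mul hp.prime, emultiplicity_eq_zero.2 not_dvd_cofactor,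
    emultiplicity_eq_zero.2 hpu]

end LiftingTheExponent

theorem exists_prime_pow_dvd_of_two_lt {a : ℕ} (ha : 2 < a) :
    ∃ p e, p.Prime ∧ 2 < p ^ e ∧ p ^ e ∣ a := by
  obtain four_dvd | ⟨p, hp, p_dvd, p_odd⟩ := Nat.four_dvd_or_exists_odd_prime_and_dvd_of_two_lt ha
  · exact ⟨2, 2, Nat.prime_two, by norm_num, four_dvd⟩
  · refine ⟨p, 1, hp, ?_, by rwa [pow_one]⟩
    rw [pow_one]
    exact hp.two_le.lt_of_ne (by rintro rfl; exact absurd p_odd (by decide))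

theorem fib_pow_dvd_G (n m k : ℕ) : Nat.fib n ^ (k + m) ∣ G n m (k + 1) := by
  induction k with
  | zero => simp [G]
  | succ k ih =>
    rw [G, Nat.add_right_comm]
    exact (fib_pow_succ_dvd_fib_mul_fib_pow n (k + m)).trans
      (Nat.fib_dvd _ _ (mul_dvd_mul_left n ih))

theorem emultiplicity_G {p e n : ℕ} (hp : p.Prime) (he : 2 < p ^ e) (hn : p ^ e ∣ Nat.fib n)
    (m k : ℕ) : emultiplicity p (G n m (k + 1)) = (k + m : ℕ) * emultiplicity p (Nat.fib n) := by
  induction k with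
  | zero => rw [G, emultiplicity_pow hp.prime, zero_add]
  | succ k ih =>
    rw [G, emultiplicity_fib_mul hp he hn, ih]
    push_cast
    ring

theorem not_fib_pow_succ_dvd_G {n : ℕ} (hn : 2 < Nat.fib n) (m k : ℕ) :
    ¬ Nat.fib n ^ (k + m + 1) ∣ G n m (k + 1) := by
  obtain ⟨p, e, hp, he, p_pow_dvd⟩ := exists_prime_pow_dvd_of_two_lt hn
  have finite : FiniteMultiplicity p (Nat.fib n) :=
    Nat.finiteMultiplicity_iff.2 ⟨hp.ne_one, by omega⟩
  have p_dvd : p ∣ Nat.fib n := (dvd_pow_self p (by rintro rfl; simp at he)).trans p_pow_dvd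
  have multiplicity_pos : 0 < multiplicity p (Nat.fib n) :=
    Nat.pos_of_ne_zero (multiplicity_ne_zero.2 p_dvd)
  intro h
  have multiplicity_le := emultiplicity_le_emultiplicity_of_dvd_right (a := p) h
  rw [emultiplicity_pow hp.prime, emultiplicity_G hp he p_pow_dvd,
    finite.emultiplicity_eq_multiplicity] at multiplicity_le
  norm_cast at multiplicity_le
  exact absurd (Nat.le_of_mul_le_mul_right multiplicity_le multiplicity_pos) (by omega)

theorem stmt_6 (k n m : ℕ) (hk : 2 ≤ k) (hn : 4 ≤ n) (hm : 1 ≤ m) :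
    Nat.fib n ^ (k + m - 1) ∣ G n m k ∧ ¬ (Nat.fib n ^ (k + m) ∣ G n m k) := by
  obtain ⟨k, rfl⟩ := Nat.exists_eq_add_of_le' (show 1 ≤ k by omega)
  have two_lt_fib : 2 < Nat.fib n := lt_of_lt_of_le (by decide) (Nat.fib_mono hn)
  rw [Nat.add_right_comm, Nat.add_sub_cancel]
  exact ⟨fib_pow_dvd_G n m k, not_fib_pow_succ_dvd_G two_lt_fib m k⟩
end

section
/- For all positive integers n, r, and s, if F_n^{s-1} divides r, then F_n^s divides F_{n·r}. -/
/-!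
Modulo `F_m ^ 2` the Fibonacci addition formula gives `F_{m k} ≡ k F_m F_{m+1} ^ (k - 1)`.
Hence, for `d ∣ F_m`, multiplying the index by `d` gains a factor `d`: `F_m d ∣ F_{m d}`.
Since `d` still divides `F_{m d}`, this can be repeated, and `d = F_n` gives the powers of `F_n`.
-/

theorem fib_add_add_fib_mul_fib (a m : ℕ) :
    Nat.fib (a + m) + Nat.fib a * Nat.fib m =
      Nat.fib a * Nat.fib (m + 1) + Nat.fib (a + 1) * Nat.fib m := by
  cases m with
  | zero => simp
  | succ m =>
    rw [← add_assoc, Nat.fib_add, Nat.fib_add_two]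
    ring

theorem fib_add_modEq_fib_sq {a m : ℕ} (hma : m ∣ a) :
    Nat.fib (a + m) ≡ Nat.fib a * Nat.fib (m + 1) + Nat.fib (a + 1) * Nat.fib m
      [MOD Nat.fib m ^ 2] := by
  have hsq : Nat.fib m ^ 2 ∣ Nat.fib a * Nat.fib m := by
    rw [sq]
    exact Nat.mul_dvd_mul_right (Nat.fib_dvd m a hma) _
  rw [← fib_add_add_fib_mul_fib]
  exact (Nat.ModEq.refl _).add hsq.modEq_zero_nat.symm

theorem fib_mul_add_one_modEq (m k : ℕ) :
    Nat.fib (m * k + 1) ≡ Nat.fib (m + 1) ^ k [MOD Nat.fib m] := by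
  induction k with
  | zero => rfl
  | succ k ih =>
    calc Nat.fib (m * (k + 1) + 1)
        = Nat.fib (m * k) * Nat.fib m + Nat.fib (m * k + 1) * Nat.fib (m + 1) := by
          rw [mul_add_one, Nat.fib_add]
      _ ≡ 0 + Nat.fib (m + 1) ^ k * Nat.fib (m + 1) [MOD Nat.fib m] :=
          (dvd_mul_left _ _).modEq_zero_nat.add (ih.mul_right _)
      _ = Nat.fib (m + 1) ^ (k + 1) := by rw [zero_add, pow_succ]

theorem fib_mul_succ_modEq_fib_sq (m k : ℕ) :
    Nat.fib (m * (k + 1)) ≡ (k + 1) * Nat.fib m * Nat.fib (m + 1) ^ k [MOD Nat.fib m ^ 2] := by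
  induction k with
  | zero => simp [Nat.ModEq]
  | succ k ih =>
    have hright : Nat.fib (m * (k + 1) + 1) * Nat.fib m ≡
        Nat.fib (m + 1) ^ (k + 1) * Nat.fib m [MOD Nat.fib m ^ 2] := by
      rw [sq]
      exact (fib_mul_add_one_modEq m (k + 1)).mul_right' _
    calc Nat.fib (m * (k + 1 + 1))
        ≡ Nat.fib (m * (k + 1)) * Nat.fib (m + 1) + Nat.fib (m * (k + 1) + 1) * Nat.fib m
          [MOD Nat.fib m ^ 2] := fib_add_modEq_fib_sq (dvd_mul_right m (k + 1))
      _ ≡ (k + 1) * Nat.fib m * Nat.fib (m + 1) ^ k * Nat.fib (m + 1) +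
            Nat.fib (m + 1) ^ (k + 1) * Nat.fib m [MOD Nat.fib m ^ 2] :=
          (ih.mul_right _).add hright
      _ = (k + 1 + 1) * Nat.fib m * Nat.fib (m + 1) ^ (k + 1) := by ring

theorem fib_mul_dvd_fib_mul {m d : ℕ} (hd : d ∣ Nat.fib m) :
    Nat.fib m * d ∣ Nat.fib (m * d) := by
  cases d with
  | zero => simp
  | succ k =>
    have hsq : Nat.fib m * (k + 1) ∣ Nat.fib m ^ 2 := by
      rw [sq]
      exact Nat.mul_dvd_mul_left _ hd
    rw [(fib_mul_succ_modEq_fib_sq m k).dvd_iff hsq, mul_comm (Nat.fib m)]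
    exact dvd_mul_right _ _

theorem fib_mul_pow_dvd_fib_mul_pow {m d : ℕ} (hd : d ∣ Nat.fib m) (t : ℕ) :
    Nat.fib m * d ^ t ∣ Nat.fib (m * d ^ t) := by
  induction t with
  | zero => simp
  | succ t ih =>
    have hd' : d ∣ Nat.fib (m * d ^ t) := hd.trans (Nat.fib_dvd _ _ (dvd_mul_right _ _))
    rw [pow_succ, ← mul_assoc, ← mul_assoc]
    exact (Nat.mul_dvd_mul_right ih d).trans (fib_mul_dvd_fib_mul hd')

theorem stmt_9 (n r s : ℕ) (hn : 1 ≤ n) (hr : 1 ≤ r) (hs : 1 ≤ s)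
    (h : Nat.fib n ^ (s - 1) ∣ r) : Nat.fib n ^ s ∣ Nat.fib (n * r) := by
  calc Nat.fib n ^ s
      = Nat.fib n * Nat.fib n ^ (s - 1) := (mul_pow_sub_one (by omega) _).symm
    _ ∣ Nat.fib (n * Nat.fib n ^ (s - 1)) := fib_mul_pow_dvd_fib_mul_pow dvd_rfl (s - 1)
    _ ∣ Nat.fib (n * r) := Nat.fib_dvd _ _ (Nat.mul_dvd_mul_left n h)
end
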